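/- The entries of B̃ satisfy |B̃_{j,ℓ}| ≤ Δy·‖f‖_∞ for all 0 ≤ j ≤ m₂ and 1 ≤ ℓ ≤ m₂−1, and |B̃_{j,0}| ≤ (1/2)Δy·‖f‖_∞ and |B̃_{j,m₂}| ≤ (1/2)Δy·‖f‖_∞ for all 0 ≤ j ≤ m₂. Consequently every column sum satisfies Σ_{j=0}^{m₂} |B̃_{j,ℓ}| ≤ L_y·‖f‖_∞ for 0 ≤ ℓ ≤ m₂, i.e. ‖B̃‖₁ ≤ L_y·‖f‖_∞, where ‖·‖₁ denotes the maximum-column-sum matrix norm. -/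

import Mathlib

open MeasureTheory

/-- F_{0,j,ℓ} = ∫_{y_ℓ}^{y_{ℓ+1}} f(ξ − y_j) dξ. -/
noncomputable def F0 (y : ℕ → ℝ) (f : ℝ → ℝ) (j ℓ : ℕ) : ℝ :=
  ∫ ξ in (y ℓ)..(y (ℓ+1)), f (ξ - y j)

/-- F_{1,j,ℓ} = ∫_{y_ℓ}^{y_{ℓ+1}} ξ f(ξ − y_j) dξ. -/
noncomputable def F1 (y : ℕ → ℝ) (f : ℝ → ℝ) (j ℓ : ℕ) : ℝ :=
  ∫ ξ in (y ℓ)..(y (ℓ+1)), ξ * f (ξ - y j)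

/-- The (m₂+1)×(m₂+1) jump quadrature matrix B̃. -/
noncomputable def Btilde (m₂ : ℕ) (y : ℕ → ℝ) (Δy : ℝ) (f : ℝ → ℝ) :
    Matrix (Fin (m₂+1)) (Fin (m₂+1)) ℝ :=
  Matrix.of fun j ℓ =>
    if ℓ.val = 0 then
      (y 1 * F0 y f j.val 0 - F1 y f j.val 0) / Δy
    else if ℓ.val = m₂ then
      (F1 y f j.val (m₂-1) - y (m₂-1) * F0 y f j.val (m₂-1)) / Δy
    else
      (F1 y f j.val (ℓ.val-1) - y (ℓ.val-1) * F0 y f j.val (ℓ.val-1)) / Δy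
        + (y (ℓ.val+1) * F0 y f j.val ℓ.val - F1 y f j.val ℓ.val) / Δy

/-!
Up to the factor `1/Δy`, each half of a hat function contributes to `B̃` the integral of a translate
of `f` against the distance to one end of a mesh cell. A linear ramp over a cell of length `Δy` has
area `Δy²/2`, so half a hat contributes at most `Δy‖f‖_∞/2`. The first and last columns consist of
one half-hat, the others of two, and a column has `m₂ + 1` entries.
-/

section Ramp

open scoped Interval

variable {E : Type*} [NormedAddCommGroup E] [NormedSpace ℝ E] {g : ℝ → E} {a b M : ℝ}

theorem norm_integral_sub_left_smul_le (hg : ∀ᵐ x, x ∈ Ι a b → ‖g x‖ ≤ M) :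
    ‖∫ x in a..b, (x - a) • g x‖ ≤ (b - a) ^ 2 / 2 * M := by
  have hramp : IntegrableOn (fun x => |x - a| * M) (Ι a b) :=
    (Continuous.intervalIntegrable (by fun_prop) a b).def'
  have hbound : ∀ᵐ x ∂volume.restrict (Ι a b), ‖(x - a) • g x‖ ≤ |x - a| * M := by
    filter_upwards [(ae_restrict_iff' measurableSet_uIoc).2 hg] with x hx
    rw [norm_smul, Real.norm_eq_abs]
    gcongr
  have harea : ∫ x in Ι a b, |x - a| = (b - a) ^ 2 / 2 := by
    simpa [one_add_one_eq_two] using integral_pow_abs_sub_uIoc (a := a) (b := b) 1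
  calc ‖∫ x in a..b, (x - a) • g x‖
      = ‖∫ x in Ι a b, (x - a) • g x‖ := intervalIntegral.norm_intervalIntegral_eq _ _ _ _
    _ ≤ ∫ x in Ι a b, |x - a| * M := norm_integral_le_of_norm_le hramp hbound
    _ = (b - a) ^ 2 / 2 * M := by rw [integral_mul_const, harea]

theorem norm_integral_sub_right_smul_le (hg : ∀ᵐ x, x ∈ Ι a b → ‖g x‖ ≤ M) :
    ‖∫ x in a..b, (x - b) • g x‖ ≤ (b - a) ^ 2 / 2 * M := by
  rw [intervalIntegral.integral_symm, norm_neg, ← neg_sub a b, neg_sq]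
  exact norm_integral_sub_left_smul_le (Set.uIoc_comm a b ▸ hg)

end Ramp

section HalfHats

variable {f : ℝ → ℝ} {M : ℝ} (hf : LocallyIntegrable f) (y : ℕ → ℝ)
include hf

theorem F1_sub_const_mul_F0 (c : ℝ) (j k : ℕ) :
    F1 y f j k - c * F0 y f j k = ∫ ξ in (y k)..(y (k + 1)), (ξ - c) * f (ξ - y j) := by
  have hshift : IntervalIntegrable (fun ξ => f (ξ - y j)) volume (y k) (y (k + 1)) := by
    simpa using ((hf.integrableOn_isCompact isCompact_uIcc).intervalIntegrable
      (a := y k - y j) (b := y (k + 1) - y j)).comp_sub_right (y j)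
  have hmoment : IntervalIntegrable (fun ξ => ξ * f (ξ - y j)) volume (y k) (y (k + 1)) :=
    hshift.continuousOn_mul continuousOn_id
  simp only [F0, F1, sub_mul]
  rw [intervalIntegral.integral_sub hmoment (hshift.const_mul c),
    intervalIntegral.integral_const_mul]

theorem abs_F1_sub_left_mul_F0_le (hM : ∀ᵐ ξ, |f ξ| ≤ M) (j k : ℕ) :
    |F1 y f j k - y k * F0 y f j k| ≤ (y (k + 1) - y k) ^ 2 / 2 * M := by
  rw [F1_sub_const_mul_F0 hf]
  exact norm_integral_sub_left_smul_le (g := fun ξ => f (ξ - y j))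
    (((eventually_sub_right_iff volume (y j)).2 hM).mono fun _ h _ => h)

theorem abs_right_mul_F0_sub_F1_le (hM : ∀ᵐ ξ, |f ξ| ≤ M) (j k : ℕ) :
    |y (k + 1) * F0 y f j k - F1 y f j k| ≤ (y (k + 1) - y k) ^ 2 / 2 * M := by
  rw [abs_sub_comm, F1_sub_const_mul_F0 hf]
  exact norm_integral_sub_right_smul_le (g := fun ξ => f (ξ - y j))
    (((eventually_sub_right_iff volume (y j)).2 hM).mono fun _ h _ => h)

end HalfHats

section UniformMesh

variable {f : ℝ → ℝ} {M Δy : ℝ} {y : ℕ → ℝ} (hf : LocallyIntegrable f)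
  (hM : ∀ᵐ ξ, |f ξ| ≤ M) (hΔy : 0 < Δy) (hy : ∀ k, y (k + 1) = y k + Δy)
include hf hM hΔy hy

theorem abs_F1_sub_left_mul_F0_div_le (j k : ℕ) :
    |(F1 y f j k - y k * F0 y f j k) / Δy| ≤ 1 / 2 * Δy * M := by
  rw [abs_div, abs_of_pos hΔy, div_le_iff₀ hΔy]
  calc |F1 y f j k - y k * F0 y f j k|
      ≤ (y (k + 1) - y k) ^ 2 / 2 * M := abs_F1_sub_left_mul_F0_le hf y hM j k
    _ = 1 / 2 * Δy * M * Δy := by rw [hy]; ring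

theorem abs_right_mul_F0_sub_F1_div_le (j k : ℕ) :
    |(y (k + 1) * F0 y f j k - F1 y f j k) / Δy| ≤ 1 / 2 * Δy * M := by
  rw [abs_div, abs_of_pos hΔy, div_le_iff₀ hΔy]
  calc |y (k + 1) * F0 y f j k - F1 y f j k|
      ≤ (y (k + 1) - y k) ^ 2 / 2 * M := abs_right_mul_F0_sub_F1_le hf y hM j k
    _ = 1 / 2 * Δy * M * Δy := by rw [hy]; ring

variable {m₂ : ℕ}

theorem abs_Btilde_zero_le (j : Fin (m₂ + 1)) : |Btilde m₂ y Δy f j 0| ≤ 1 / 2 * Δy * M := by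
  simpa only [Btilde, Matrix.of_apply, Fin.val_zero, if_true] using
    abs_right_mul_F0_sub_F1_div_le hf hM hΔy hy j 0

theorem abs_Btilde_last_le (hm₂ : m₂ ≠ 0) (j : Fin (m₂ + 1)) :
    |Btilde m₂ y Δy f j (Fin.last m₂)| ≤ 1 / 2 * Δy * M := by
  simpa only [Btilde, Matrix.of_apply, Fin.val_last, if_neg hm₂, if_true] using
    abs_F1_sub_left_mul_F0_div_le hf hM hΔy hy j (m₂ - 1)

theorem abs_Btilde_interior_le (j : Fin (m₂ + 1)) {ℓ : Fin (m₂ + 1)} (hℓ₀ : ℓ.val ≠ 0)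
    (hℓ : ℓ.val ≠ m₂) : |Btilde m₂ y Δy f j ℓ| ≤ Δy * M := by
  simp only [Btilde, Matrix.of_apply, if_neg hℓ₀, if_neg hℓ]
  have hrising := abs_F1_sub_left_mul_F0_div_le hf hM hΔy hy j (ℓ - 1)
  have hfalling := abs_right_mul_F0_sub_F1_div_le hf hM hΔy hy j ℓ
  exact (abs_add_le _ _).trans (by linarith)

theorem abs_Btilde_le (j ℓ : Fin (m₂ + 1)) : |Btilde m₂ y Δy f j ℓ| ≤ Δy * M := by
  obtain ⟨ξ, hξ⟩ := hM.exists
  have hM₀ : 0 ≤ Δy * M := mul_nonneg hΔy.le ((abs_nonneg _).trans hξ)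
  by_cases hℓ₀ : ℓ.val = 0
  · obtain rfl : ℓ = 0 := Fin.ext hℓ₀
    linarith [abs_Btilde_zero_le hf hM hΔy hy j]
  by_cases hℓ : ℓ.val = m₂
  · obtain rfl : ℓ = Fin.last m₂ := Fin.ext hℓ
    linarith [abs_Btilde_last_le hf hM hΔy hy (m₂ := m₂) hℓ₀ j]
  exact abs_Btilde_interior_le hf hM hΔy hy j hℓ₀ hℓ

theorem sum_abs_Btilde_le (ℓ : Fin (m₂ + 1)) :
    ∑ j, |Btilde m₂ y Δy f j ℓ| ≤ (m₂ + 1) * (Δy * M) := by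
  simpa using Finset.sum_le_card_nsmul Finset.univ _ _ fun j _ => abs_Btilde_le hf hM hΔy hy j ℓ

end UniformMesh

theorem jump_matrix_column_sums_general {f : ℝ → ℝ} (hf : LocallyIntegrable f) {M : ℝ}
    (hM : ∀ᵐ ξ, |f ξ| ≤ M) {m₂ : ℕ} (hm₂ : 1 ≤ m₂) (y₀ : ℝ) {Δy : ℝ} (hΔy : 0 < Δy) :
    let y : ℕ → ℝ := fun k => y₀ + k * Δy
    let Ly : ℝ := (m₂ + 2) * Δy
    let B := Btilde m₂ y Δy f
    (∀ j ℓ : Fin (m₂ + 1), 1 ≤ ℓ.val → ℓ.val ≤ m₂ - 1 → |B j ℓ| ≤ Δy * M) ∧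
    (∀ j : Fin (m₂ + 1), |B j 0| ≤ 1 / 2 * Δy * M) ∧
    (∀ j : Fin (m₂ + 1), |B j (Fin.last m₂)| ≤ 1 / 2 * Δy * M) ∧
    (∀ ℓ : Fin (m₂ + 1), ∑ j, |B j ℓ| ≤ Ly * M) ∧
    (⨆ ℓ : Fin (m₂ + 1), ∑ j, |B j ℓ|) ≤ Ly * M := by
  intro y Ly B
  have hy : ∀ k, y (k + 1) = y k + Δy := fun k => by simp only [y]; push_cast; ring
  obtain ⟨ξ, hξ⟩ := hM.exists
  have hM₀ : 0 ≤ Δy * M := mul_nonneg hΔy.le ((abs_nonneg _).trans hξ)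
  have hsum : ∀ ℓ, ∑ j, |B j ℓ| ≤ Ly * M := fun ℓ =>
    calc ∑ j, |B j ℓ| ≤ (m₂ + 1) * (Δy * M) := sum_abs_Btilde_le hf hM hΔy hy ℓ
      _ ≤ (m₂ + 2) * (Δy * M) := by gcongr; norm_num
      _ = Ly * M := by simp only [Ly]; ring
  exact ⟨fun j ℓ h₁ h₂ => abs_Btilde_interior_le hf hM hΔy hy j (by lia) (by lia),
    abs_Btilde_zero_le hf hM hΔy hy, abs_Btilde_last_le hf hM hΔy hy (by lia), hsum, ciSup_le hsum⟩

/-- The entries of B̃ satisfy |B̃_{j,ℓ}| ≤ Δy‖f‖_∞ for 1 ≤ ℓ ≤ m₂−1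
and |B̃_{j,0}|, |B̃_{j,m₂}| ≤ (1/2)Δy‖f‖_∞, for all 0 ≤ j ≤ m₂.  Consequently every
column sum satisfies Σ_j |B̃_{j,ℓ}| ≤ L_y‖f‖_∞, i.e. ‖B̃‖₁ ≤ L_y‖f‖_∞ in the
maximum-column-sum norm. -/
theorem jump_matrix_column_sums
    (f : ℝ → ℝ) (hf0 : ∀ ξ : ℝ, 0 ≤ f ξ) (hfi : Integrable f)
    (hfb : BddAbove (Set.range f)) (hf1 : (∫ ξ : ℝ, f ξ) = 1)
    (m₂ : ℕ) (hm₂ : 1 ≤ m₂) (y₀ Δy : ℝ) (hΔy : 0 < Δy) :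
    let y : ℕ → ℝ := fun k => y₀ + k * Δy
    let Ly : ℝ := (m₂ + 2) * Δy
    let fsup : ℝ := ⨆ ξ : ℝ, f ξ
    let B := Btilde m₂ y Δy f
    (∀ j ℓ : Fin (m₂+1), 1 ≤ ℓ.val → ℓ.val ≤ m₂ - 1 → |B j ℓ| ≤ Δy * fsup) ∧
    (∀ j : Fin (m₂+1), |B j ⟨0, Nat.succ_pos m₂⟩| ≤ (1/2) * Δy * fsup) ∧
    (∀ j : Fin (m₂+1), |B j ⟨m₂, Nat.lt_succ_self m₂⟩| ≤ (1/2) * Δy * fsup) ∧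
    (∀ ℓ : Fin (m₂+1), ∑ j : Fin (m₂+1), |B j ℓ| ≤ Ly * fsup) ∧
    (⨆ ℓ : Fin (m₂+1), ∑ j : Fin (m₂+1), |B j ℓ|) ≤ Ly * fsup := by
  exact jump_matrix_column_sums_general hfi.locallyIntegrable
    (.of_forall fun ξ => (abs_of_nonneg (hf0 ξ)).trans_le (le_ciSup hfb ξ)) hm₂ y₀ hΔy
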